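/- (Proposition 3.6, full Euler case.) Let (ρ,u,s) be a classical solution of the full compressible Euler equations on ℝⁿ × [0,T] satisfying the decay, integrability and entropy conditions, and set J(0) = G(0) − F(0) + E(0). If 1 < γ ≤ 1 + 2/n, then for all t ∈ [0,T] the internal energy satisfies E_i(t) ≤ J(0)/(t+1)^{n(γ−1)}; if γ > 1 + 2/n, then E_i(t) ≤ J(0)/(t+1)² for all t ∈ [0,T]. -/

import Mathlib

open MeasureTheory Filter
open scoped InnerProductSpace

noncomputable section

/-- A classical solution of the full compressible Euler equations for a polytropic gas
with pressure `p = exp(s/c_ν) ρ^γ`: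
`∂ₜρ + div(ρu) = 0`, `∂ₜ(ρuᵢ) + div(ρuᵢu) + ∂ᵢp = 0`,
`∂ₜ((1/2)ρ|u|² + p/(γ−1)) + div(((1/2)ρ|u|² + γp/(γ−1))u) = 0` on `ℝⁿ × [0,T]`,
together with the decay conditions (9-25), the entropy lower bound `s ≥ s₁`, the
integrability conditions on the physical quantities, and differentiability of these
quantities with derivatives computed by differentiating under the integral sign. -/
structure FullEulerSolution (n : ℕ) (γ cν s₁ T : ℝ) where
  ρ : ℝ → EuclideanSpace ℝ (Fin n) → ℝ
  u : ℝ → EuclideanSpace ℝ (Fin n) → EuclideanSpace ℝ (Fin n)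
  s : ℝ → EuclideanSpace ℝ (Fin n) → ℝ
  ρ_nonneg : ∀ t ∈ Set.Icc 0 T, ∀ x, 0 ≤ ρ t x
  /-- the entropy condition: `s(x,t) ≥ s₁ = min_x s(x,0)`. -/
  entropy_lb : ∀ t ∈ Set.Icc 0 T, ∀ x, s₁ ≤ s t x
  smooth_ρ : ContDiffOn ℝ 1 (fun p : ℝ × EuclideanSpace ℝ (Fin n) => ρ p.1 p.2)
    (Set.Icc 0 T ×ˢ Set.univ)
  smooth_u : ContDiffOn ℝ 1 (fun p : ℝ × EuclideanSpace ℝ (Fin n) => u p.1 p.2)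
    (Set.Icc 0 T ×ˢ Set.univ)
  smooth_s : ContDiffOn ℝ 1 (fun p : ℝ × EuclideanSpace ℝ (Fin n) => s p.1 p.2)
    (Set.Icc 0 T ×ˢ Set.univ)
  /-- Conservation of mass: `∂ₜρ + div(ρu) = 0`. -/
  mass_eq : ∀ t ∈ Set.Icc 0 T, ∀ x,
    deriv (fun τ => ρ τ x) t
      + ∑ i : Fin n, fderiv ℝ (fun y => ρ t y * u t y i) x (EuclideanSpace.single i 1) = 0
  /-- Conservation of momentum: `∂ₜ(ρuᵢ) + div(ρuᵢu) + ∂ᵢp = 0`. -/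
  momentum_eq : ∀ t ∈ Set.Icc 0 T, ∀ x, ∀ i : Fin n,
    deriv (fun τ => ρ τ x * u τ x i) t
      + ∑ j : Fin n, fderiv ℝ (fun y => ρ t y * u t y i * u t y j) x (EuclideanSpace.single j 1)
      + fderiv ℝ (fun y => Real.exp (s t y / cν) * ρ t y ^ γ) x (EuclideanSpace.single i 1)
      = 0
  /-- Conservation of energy:
  `∂ₜ((1/2)ρ|u|² + p/(γ−1)) + div(((1/2)ρ|u|² + γp/(γ−1))u) = 0`. -/
  energy_eq : ∀ t ∈ Set.Icc 0 T, ∀ x,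
    deriv (fun τ => (1 / 2 : ℝ) * ρ τ x * ‖u τ x‖ ^ 2
        + Real.exp (s τ x / cν) * ρ τ x ^ γ / (γ - 1)) t
      + ∑ i : Fin n, fderiv ℝ (fun y => ((1 / 2 : ℝ) * ρ t y * ‖u t y‖ ^ 2
          + γ * (Real.exp (s t y / cν) * ρ t y ^ γ) / (γ - 1)) * u t y i) x
          (EuclideanSpace.single i 1) = 0
  /-- decay: `|u| → 0` as `|x| → ∞`. -/
  decay_u : ∀ t ∈ Set.Icc 0 T,
    Tendsto (fun x => ‖u t x‖) (Bornology.cobounded _) (nhds 0)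
  /-- decay: `ρ|u| = o(|x|^{-(n+1)})`. -/
  decay_ρu : ∀ t ∈ Set.Icc 0 T,
    Tendsto (fun x => ‖x‖ ^ (n + 1) * (ρ t x * ‖u t x‖)) (Bornology.cobounded _) (nhds 0)
  /-- decay: `|∇ₓu| = o(|x|^{-n})`. -/
  decay_gradu : ∀ t ∈ Set.Icc 0 T,
    Tendsto (fun x => ‖x‖ ^ n * ‖fderiv ℝ (u t) x‖) (Bornology.cobounded _) (nhds 0)
  /-- decay: the pressure `p = o(|x|^{-n})`. -/
  decay_p : ∀ t ∈ Set.Icc 0 T,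
    Tendsto (fun x => ‖x‖ ^ n * (Real.exp (s t x / cν) * ρ t x ^ γ))
      (Bornology.cobounded _) (nhds 0)
  int_ρ : ∀ t ∈ Set.Icc 0 T, Integrable (ρ t)
  int_ρu : ∀ t ∈ Set.Icc 0 T, Integrable (fun x => ρ t x * ‖u t x‖)
  int_ρu2 : ∀ t ∈ Set.Icc 0 T, Integrable (fun x => ρ t x * ‖u t x‖ ^ 2)
  int_ρx2 : ∀ t ∈ Set.Icc 0 T, Integrable (fun x => ρ t x * ‖x‖ ^ 2)
  int_ρux : ∀ t ∈ Set.Icc 0 T, Integrable (fun x => ρ t x * ‖u t x‖ * ‖x‖)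
  int_p : ∀ t ∈ Set.Icc 0 T, Integrable (fun x => Real.exp (s t x / cν) * ρ t x ^ γ)
  /-- `M(t) = ∫ρ` is differentiable, by differentiation under the integral sign. -/
  hM : ∀ t ∈ Set.Icc 0 T,
    HasDerivAt (fun τ => ∫ x, ρ τ x) (∫ x, deriv (fun τ => ρ τ x) t) t
  /-- `ℙ(t) = ∫ρu` is differentiable, by differentiation under the integral sign. -/
  hP : ∀ t ∈ Set.Icc 0 T,
    HasDerivAt (fun τ => ∫ x, ρ τ x • u τ x) (∫ x, deriv (fun τ => ρ τ x • u τ x) t) t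
  /-- `F(t) = ∫ρ u·x` is differentiable, by differentiation under the integral sign. -/
  hF : ∀ t ∈ Set.Icc 0 T,
    HasDerivAt (fun τ => ∫ x, ρ τ x * ⟪u τ x, x⟫_ℝ)
      (∫ x, deriv (fun τ => ρ τ x * ⟪u τ x, x⟫_ℝ) t) t
  /-- `G(t) = (1/2)∫ρ|x|²` is differentiable, by differentiation under the integral sign. -/
  hG : ∀ t ∈ Set.Icc 0 T,
    HasDerivAt (fun τ => (1 / 2 : ℝ) * ∫ x, ρ τ x * ‖x‖ ^ 2)
      ((1 / 2 : ℝ) * ∫ x, deriv (fun τ => ρ τ x * ‖x‖ ^ 2) t) t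
  /-- `E(t) = E_k(t) + E_i(t)` is differentiable, by differentiation under the integral
  sign. -/
  hE : ∀ t ∈ Set.Icc 0 T,
    HasDerivAt (fun τ => ∫ x, ((1 / 2 : ℝ) * ρ τ x * ‖u τ x‖ ^ 2
        + Real.exp (s τ x / cν) * ρ τ x ^ γ / (γ - 1)))
      (∫ x, deriv (fun τ => (1 / 2 : ℝ) * ρ τ x * ‖u τ x‖ ^ 2
        + Real.exp (s τ x / cν) * ρ τ x ^ γ / (γ - 1)) t) t

namespace FullEulerSolution

variable {n : ℕ} {γ cν s₁ T : ℝ}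

/-- The mass `M(t) = ∫ ρ dx`. -/
def M (S : FullEulerSolution n γ cν s₁ T) (t : ℝ) : ℝ := ∫ x, S.ρ t x

/-- The momentum `ℙ(t) = ∫ ρ u dx`. -/
def P (S : FullEulerSolution n γ cν s₁ T) (t : ℝ) : EuclideanSpace ℝ (Fin n) :=
  ∫ x, S.ρ t x • S.u t x

/-- The momentum weight `F(t) = ∫ ρ u·x dx`. -/
def F (S : FullEulerSolution n γ cν s₁ T) (t : ℝ) : ℝ := ∫ x, S.ρ t x * ⟪S.u t x, x⟫_ℝ

/-- The momentum of inertia `G(t) = (1/2) ∫ ρ |x|² dx`. -/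
def G (S : FullEulerSolution n γ cν s₁ T) (t : ℝ) : ℝ :=
  (1 / 2 : ℝ) * ∫ x, S.ρ t x * ‖x‖ ^ 2

/-- The kinetic energy `E_k(t) = (1/2) ∫ ρ |u|² dx`. -/
def Ek (S : FullEulerSolution n γ cν s₁ T) (t : ℝ) : ℝ :=
  (1 / 2 : ℝ) * ∫ x, S.ρ t x * ‖S.u t x‖ ^ 2

/-- The internal energy `E_i(t) = (1/(γ−1)) ∫ p dx` with `p = exp(s/c_ν) ρ^γ`. -/
def Ei (S : FullEulerSolution n γ cν s₁ T) (t : ℝ) : ℝ :=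
  (1 / (γ - 1)) * ∫ x, Real.exp (S.s t x / cν) * S.ρ t x ^ γ

/-- The total energy `E(t) = E_k(t) + E_i(t)`. -/
def E (S : FullEulerSolution n γ cν s₁ T) (t : ℝ) : ℝ := S.Ek t + S.Ei t

/-- The functional `J(t) = G(t) − (t+1)F(t) + (t+1)² E(t)`. -/
def J (S : FullEulerSolution n γ cν s₁ T) (t : ℝ) : ℝ :=
  S.G t - (t + 1) * S.F t + (t + 1) ^ 2 * S.E t

end FullEulerSolution

/-!
Testing mass conservation with `|x|²/2` and momentum conservation with `xᵢ` gives `G' = F` and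
`F' = 2 Eₖ + n(γ-1) Eᵢ`, while `E` is constant. Hence `J' = (2 - n(γ-1))(t+1) Eᵢ`. Completing the
square, `J = ½∫ρ|x - (t+1)u|² + (t+1)² Eᵢ`, so `(t+1)² Eᵢ ≤ J`, and for
`a ≥ max (0, 2 - n(γ-1))` the function `(t+1)⁻ᵃ J` is nonincreasing. This bounds `(t+1)²⁻ᵃ Eᵢ` by
`J 0`; take `a = 2 - n(γ-1)` or `a = 0` according to the sign of `2 - n(γ-1)`.

Neither `∂ₜρ` nor `∂ₜ(ρu)` is known to be integrable against these weights, so both laws are tested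
with weights times cutoffs and integrated in time before the cutoffs are removed: only the fluxes
have to be dominated, and the identities come back in integrated form. Differentiating them requires
`Eₖ` and `Eᵢ` to be continuous in time separately, which follows from Fatou's lemma and the
conservation of their sum.
-/

section Limits

variable {α : Type*} [MeasurableSpace α] {μ : Measure α}

theorem lowerSemicontinuous_integral {X : Type*} [TopologicalSpace X] [FirstCountableTopology X]
    {f : X → α → ℝ} (hf_int : ∀ t, Integrable (f t) μ) (hf_nonneg : ∀ t x, 0 ≤ f t x)
    (hf : ∀ x, LowerSemicontinuous fun t => f t x) :
    LowerSemicontinuous fun t => ∫ x, f t x ∂μ := by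
  have hlint : LowerSemicontinuous fun t => ∫⁻ x, ENNReal.ofReal (f t x) ∂μ := by
    refine lowerSemicontinuous_iff_le_liminf.2 fun t => ?_
    refine le_trans (lintegral_mono fun x => ?_)
      (lintegral_liminf_le' fun t => (hf_int t).aemeasurable.ennreal_ofReal)
    exact (ENNReal.continuous_ofReal.comp_lowerSemicontinuous (hf x)
      ENNReal.ofReal_mono).le_liminf t
  intro t c hc
  rcases lt_or_ge c 0 with hneg | hpos
  · exact Eventually.of_forall fun τ => hneg.trans_le (integral_nonneg (hf_nonneg τ))
  · have hof : ∀ τ, c < ∫ x, f τ x ∂μ ↔ ENNReal.ofReal c < ∫⁻ x, ENNReal.ofReal (f τ x) ∂μ :=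
      fun τ => by
        rw [← ofReal_integral_eq_lintegral_ofReal (hf_int τ) (Eventually.of_forall (hf_nonneg τ)),
          ENNReal.ofReal_lt_ofReal_iff_of_nonneg hpos]
    simp only [hof] at hc ⊢
    exact hlint t _ hc

/-- Fatou's lemma makes both summands lower semicontinuous, so continuity of the sum makes each of
them upper semicontinuous too. -/
theorem continuous_integral_of_continuous_integral_add {X : Type*} [TopologicalSpace X]
    [FirstCountableTopology X] {f g : X → α → ℝ}
    (hf_int : ∀ t, Integrable (f t) μ) (hf_nonneg : ∀ t x, 0 ≤ f t x)
    (hf : ∀ x, Continuous fun t => f t x)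
    (hg_int : ∀ t, Integrable (g t) μ) (hg_nonneg : ∀ t x, 0 ≤ g t x)
    (hg : ∀ x, Continuous fun t => g t x)
    (hfg : Continuous fun t => ∫ x, (f t x + g t x) ∂μ) :
    Continuous fun t => ∫ x, f t x ∂μ := by
  have hf_lsc := lowerSemicontinuous_integral hf_int hf_nonneg fun x => (hf x).lowerSemicontinuous
  have hg_lsc := lowerSemicontinuous_integral hg_int hg_nonneg fun x => (hg x).lowerSemicontinuous
  refine continuous_iff_lower_upperSemicontinuous.2 ⟨hf_lsc, ?_⟩
  have hsub : (fun t => ∫ x, f t x ∂μ) =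
      fun t => ∫ x, (f t x + g t x) ∂μ + -∫ x, g t x ∂μ := by
    funext t
    rw [integral_add (hf_int t) (hg_int t), add_neg_cancel_right]
  rw [hsub]
  exact hfg.upperSemicontinuous.add
    (continuous_neg.comp_lowerSemicontinuous_antitone hg_lsc fun _ _ => neg_le_neg)

theorem tendsto_integral_of_dominated_of_eventually_eq {f : ℕ → α → ℝ} {g bound : α → ℝ}
    (hf : ∀ k, AEStronglyMeasurable (f k) μ) (hbound : Integrable bound μ)
    (hle : ∀ k x, |f k x| ≤ bound x) (hfg : ∀ x, ∀ᶠ k in atTop, f k x = g x) :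
    Tendsto (fun k => ∫ x, f k x ∂μ) atTop (nhds (∫ x, g x ∂μ)) :=
  tendsto_integral_of_dominated_convergence bound hf hbound
    (fun k => Eventually.of_forall (hle k))
    (Eventually.of_forall fun x => tendsto_nhds_of_eventually_eq (hfg x))

theorem intervalIntegrable_and_integral_eq_sub_of_tendsto_deriv {a b C fa fb : ℝ} {f f' : ℕ → ℝ → ℝ}
    {g : ℝ → ℝ} (hab : a ≤ b) (hf : ∀ k, ContinuousOn (f k) (Set.Icc a b))
    (hff' : ∀ k, ∀ t ∈ Set.Ioo a b, HasDerivAt (f k) (f' k t) t)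
    (hC : ∀ k, ∀ t ∈ Set.Ioo a b, |f' k t| ≤ C)
    (hg : ∀ t ∈ Set.Ioo a b, Tendsto (fun k => f' k t) atTop (nhds (g t)))
    (ha : Tendsto (fun k => f k a) atTop (nhds fa))
    (hb : Tendsto (fun k => f k b) atTop (nhds fb)) :
    IntervalIntegrable g volume a b ∧ ∫ t in a..b, g t = fb - fa := by
  have hmeas : ∀ k, AEStronglyMeasurable (f' k) (volume.restrict (Set.Ioo a b)) := fun k =>
    (aestronglyMeasurable_deriv (f k) _).congr
      (ae_restrict_of_forall_mem measurableSet_Ioo fun t ht => (hff' k t ht).deriv)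
  have hbd : ∀ k, ∀ᵐ t ∂(volume.restrict (Set.Ioo a b)), ‖f' k t‖ ≤ C := fun k =>
    ae_restrict_of_forall_mem measurableSet_Ioo (hC k)
  have hconst : Integrable (fun _ : ℝ => C) (volume.restrict (Set.Ioo a b)) :=
    integrableOn_const (by simp)
  have hftc : ∀ k, ∫ t in Set.Ioo a b, f' k t = f k b - f k a := fun k => by
    rw [← integral_Ioc_eq_integral_Ioo, ← intervalIntegral.integral_of_le hab]
    refine intervalIntegral.integral_eq_sub_of_hasDerivAt_of_le hab (hf k) (hff' k) ?_
    rw [intervalIntegrable_iff_integrableOn_Ioo_of_le hab]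
    exact hconst.mono' (hmeas k) (hbd k)
  have hlim := tendsto_integral_of_dominated_convergence (fun _ => C) hmeas hconst hbd
    (ae_restrict_of_forall_mem measurableSet_Ioo hg)
  simp only [hftc] at hlim
  rw [intervalIntegrable_iff_integrableOn_Ioo_of_le hab, intervalIntegral.integral_of_le hab,
    integral_Ioc_eq_integral_Ioo]
  refine ⟨hconst.mono' (aestronglyMeasurable_of_tendsto_ae atTop hmeas
    (ae_restrict_of_forall_mem measurableSet_Ioo hg)) ?_, tendsto_nhds_unique hlim (hb.sub ha)⟩
  exact ae_restrict_of_forall_mem measurableSet_Ioo fun t ht =>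
    le_of_tendsto (hg t ht).norm (Eventually.of_forall fun k => hC k t ht)

theorem hasDerivAt_of_forall_integral_eq_sub {f g : ℝ → ℝ} {a b t : ℝ}
    (hg : ContinuousOn g (Set.Icc a b))
    (hfg : ∀ τ ∈ Set.Icc a b, ∫ s in a..τ, g s = f τ - f a) (ht : t ∈ Set.Ioo a b) :
    HasDerivAt f (g t) t := by
  have hnhds : Set.Icc a b ∈ nhds t := Icc_mem_nhds ht.1 ht.2
  have hint : IntervalIntegrable g volume a t :=
    (hg.mono (Set.Icc_subset_Icc_right ht.2.le)).intervalIntegrable_of_Icc ht.1.le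
  have hder := intervalIntegral.integral_hasDerivAt_right hint
    ((hg.mono Set.Ioo_subset_Icc_self).stronglyMeasurableAtFilter isOpen_Ioo t ht)
    (hg.continuousAt hnhds)
  refine (hder.add_const (f a)).congr_of_eventuallyEq ?_
  filter_upwards [hnhds] with τ hτ
  rw [hfg τ hτ, sub_add_cancel]

end Limits

section Cutoff

variable {V : Type*} [NormedAddCommGroup V] [InnerProductSpace ℝ V] {φ : ℕ → V → ℝ} {C : ℝ}
  {ψ h : V → ℝ} {A : V → V}

/-- A cutoff sequence: compactly supported `C¹` functions with values in `[-1, 1]`, eventually equal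
to `1` near each point, whose gradients are `O(1 / (1 + |x|))` uniformly along the sequence. -/
structure IsCutoffSeq (φ : ℕ → V → ℝ) (C : ℝ) : Prop where
  contDiff : ∀ k, ContDiff ℝ 1 (φ k)
  hasCompactSupport : ∀ k, HasCompactSupport (φ k)
  abs_le_one : ∀ k x, |φ k x| ≤ 1
  norm_fderiv_le : ∀ k x, (1 + ‖x‖) * ‖fderiv ℝ (φ k) x‖ ≤ C
  eventuallyEq_one : ∀ x, ∀ᶠ k in atTop, φ k =ᶠ[nhds x] 1

/-- The field `A` pairs with the weight `ψ` under the integrable bound `h`: both `∇ψ · A` and, up to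
the factor `1 + |x|` that the gradient of a cutoff supplies, `ψ A` are dominated by `h`. -/
structure FluxDominated [MeasurableSpace V] (μ : Measure V) (ψ : V → ℝ) (A : V → V)
    (h : V → ℝ) : Prop where
  contDiff : ContDiff ℝ 1 ψ
  continuous_flux : Continuous A
  integrable : Integrable h μ
  abs_fderiv_le : ∀ x, |fderiv ℝ ψ x (A x)| ≤ h x
  abs_mul_norm_le : ∀ x, |ψ x| * ‖A x‖ ≤ (1 + ‖x‖) * h x

theorem exists_isCutoffSeq [FiniteDimensional ℝ V] :
    ∃ (φ : ℕ → V → ℝ) (C : ℝ), IsCutoffSeq φ C := by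
  let b : ContDiffBump (0 : V) := ⟨1, 2, one_pos, one_lt_two⟩
  let r : ℕ → ℝ := fun k => 1 / ((k : ℝ) + 1)
  have hr_pos : ∀ k, 0 < r k := fun k => by positivity
  have hr_le : ∀ k, r k ≤ 1 := fun k => div_le_one_of_le₀ (by simp) (by positivity)
  have hr_lim : Tendsto r atTop (nhds 0) := tendsto_one_div_add_atTop_nhds_zero_nat
  have hb : ContDiff ℝ 1 b := b.contDiff
  obtain ⟨C, hC⟩ : ∃ C, ∀ y, ‖(1 + ‖y‖) * ‖fderiv ℝ b y‖‖ ≤ C :=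
    ((b.hasCompactSupport.fderiv ℝ).norm.mul_left).exists_bound_of_continuous
      ((continuous_const.add continuous_norm).mul (hb.continuous_fderiv one_ne_zero).norm)
  refine ⟨fun k x => b (r k • x), C, fun k => hb.comp (contDiff_const_smul _),
    fun k => b.hasCompactSupport.comp_smul (hr_pos k).ne',
    fun k x => (abs_of_nonneg b.nonneg).trans_le b.le_one, fun k x => ?_, fun x => ?_⟩
  · calc (1 + ‖x‖) * ‖fderiv ℝ (fun y => b (r k • y)) x‖
        = (r k + ‖r k • x‖) * ‖fderiv ℝ b (r k • x)‖ := by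
          rw [fderiv_comp_smul, norm_smul, norm_smul, Real.norm_of_nonneg (hr_pos k).le]
          ring
      _ ≤ (1 + ‖r k • x‖) * ‖fderiv ℝ b (r k • x)‖ := by gcongr; exact hr_le k
      _ ≤ C := (le_abs_self _).trans (hC _)
  · have hlim : Tendsto (fun k => r k • x) atTop (nhds 0) := by
      simpa only [zero_smul] using hr_lim.smul_const x
    filter_upwards [hlim.eventually b.eventuallyEq_one.eventually_nhds] with k hk
    exact (continuous_const_smul (r k)).continuousAt.eventually hk

namespace FluxDominated

variable [MeasurableSpace V] {μ : Measure V}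

theorem nonneg (hA : FluxDominated μ ψ A h) (x : V) : 0 ≤ h x :=
  (abs_nonneg _).trans (hA.abs_fderiv_le x)

theorem abs_fderiv_cutoff_mul_le (hA : FluxDominated μ ψ A h) (hφ : IsCutoffSeq φ C) (k : ℕ)
    (x : V) : |fderiv ℝ (fun y => φ k y * ψ y) x (A x)| ≤ (1 + C) * h x := by
  have hfderiv : fderiv ℝ (fun y => φ k y * ψ y) x (A x)
      = φ k x * fderiv ℝ ψ x (A x) + ψ x * fderiv ℝ (φ k) x (A x) := by
    rw [fderiv_fun_mul ((hφ.contDiff k).differentiable one_ne_zero x)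
      (hA.contDiff.differentiable one_ne_zero x)]
    rfl
  have hweight : |φ k x * fderiv ℝ ψ x (A x)| ≤ h x := by
    rw [abs_mul]
    exact (mul_le_of_le_one_left (abs_nonneg _) (hφ.abs_le_one k x)).trans (hA.abs_fderiv_le x)
  have hcutoff : |ψ x * fderiv ℝ (φ k) x (A x)| ≤ C * h x := by
    calc |ψ x * fderiv ℝ (φ k) x (A x)|
        ≤ |ψ x| * (‖fderiv ℝ (φ k) x‖ * ‖A x‖) := by
          rw [abs_mul]
          gcongr
          exact (fderiv ℝ (φ k) x).le_opNorm _
      _ = ‖fderiv ℝ (φ k) x‖ * (|ψ x| * ‖A x‖) := by ring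
      _ ≤ ‖fderiv ℝ (φ k) x‖ * ((1 + ‖x‖) * h x) :=
          mul_le_mul_of_nonneg_left (hA.abs_mul_norm_le x) (norm_nonneg _)
      _ = (1 + ‖x‖) * ‖fderiv ℝ (φ k) x‖ * h x := by ring
      _ ≤ C * h x := mul_le_mul_of_nonneg_right (hφ.norm_fderiv_le k x) (hA.nonneg x)
  rw [hfderiv, add_mul, one_mul]
  exact (abs_add_le _ _).trans (add_le_add hweight hcutoff)

theorem abs_integral_fderiv_cutoff_mul_le (hA : FluxDominated μ ψ A h) (hφ : IsCutoffSeq φ C)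
    (k : ℕ) : |∫ x, fderiv ℝ (fun y => φ k y * ψ y) x (A x) ∂μ| ≤ (1 + C) * ∫ x, h x ∂μ := by
  rw [← integral_const_mul]
  exact norm_integral_le_of_norm_le
    (f := fun x => fderiv ℝ (fun y => φ k y * ψ y) x (A x)) (hA.integrable.const_mul _)
    (Eventually.of_forall (hA.abs_fderiv_cutoff_mul_le hφ k))

theorem tendsto_integral_fderiv_cutoff_mul [FiniteDimensional ℝ V] [BorelSpace V]
    (hA : FluxDominated μ ψ A h) (hφ : IsCutoffSeq φ C) :
    Tendsto (fun k => ∫ x, fderiv ℝ (fun y => φ k y * ψ y) x (A x) ∂μ) atTop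
      (nhds (∫ x, fderiv ℝ ψ x (A x) ∂μ)) := by
  refine tendsto_integral_of_dominated_of_eventually_eq (fun k => ?_)
    (hA.integrable.const_mul (1 + C)) (hA.abs_fderiv_cutoff_mul_le hφ) fun x => ?_
  · exact ((((hφ.contDiff k).mul hA.contDiff).continuous_fderiv one_ne_zero).clm_apply
      hA.continuous_flux).aestronglyMeasurable
  · filter_upwards [hφ.eventuallyEq_one x] with k hk
    have heq : (fun y => φ k y * ψ y) =ᶠ[nhds x] ψ := by
      filter_upwards [hk] with y hy
      rw [hy, Pi.one_apply, one_mul]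
    rw [heq.fderiv_eq]

end FluxDominated

theorem IsCutoffSeq.tendsto_integral_mul [FiniteDimensional ℝ V] [MeasurableSpace V] [BorelSpace V]
    {μ : Measure V} {f : V → ℝ} (hφ : IsCutoffSeq φ C) (hf : Integrable f μ) :
    Tendsto (fun k => ∫ x, f x * φ k x ∂μ) atTop (nhds (∫ x, f x ∂μ)) := by
  refine tendsto_integral_of_dominated_of_eventually_eq (fun k => ?_) hf.abs (fun k x => ?_)
    fun x => ?_
  · exact hf.aestronglyMeasurable.mul (hφ.contDiff k).continuous.aestronglyMeasurable
  · rw [abs_mul]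
    exact mul_le_of_le_one_right (abs_nonneg _) (hφ.abs_le_one k x)
  · filter_upwards [hφ.eventuallyEq_one x] with k hk
    rw [hk.self_of_nhds, Pi.one_apply, mul_one]

end Cutoff

section Divergence

variable {ι : Type*} [Fintype ι] [DecidableEq ι] {A B : EuclideanSpace ℝ ι → EuclideanSpace ℝ ι}
  {ψ h : EuclideanSpace ℝ ι → ℝ} {x : EuclideanSpace ℝ ι}

/-- The divergence `∑ᵢ ∂ᵢAᵢ` of a vector field on a Euclidean space. -/
def divergence (A : EuclideanSpace ℝ ι → EuclideanSpace ℝ ι) (x : EuclideanSpace ℝ ι) : ℝ :=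
  ∑ i, fderiv ℝ (fun y => A y i) x (EuclideanSpace.single i 1)

theorem divergence_add (hA : DifferentiableAt ℝ A x) (hB : DifferentiableAt ℝ B x) :
    divergence (fun y => A y + B y) x = divergence A x + divergence B x := by
  simp only [divergence, PiLp.add_apply, ← Finset.sum_add_distrib]
  refine Finset.sum_congr rfl fun i _ => ?_
  rw [fderiv_fun_add (differentiableAt_euclidean.1 hA i) (differentiableAt_euclidean.1 hB i),
    add_apply]

theorem divergence_smul_single (p : EuclideanSpace ℝ ι → ℝ) (i : ι) :
    divergence (fun y => p y • EuclideanSpace.single i 1) x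
      = fderiv ℝ p x (EuclideanSpace.single i 1) := by
  rw [divergence, Finset.sum_eq_single i (fun j _ hj => ?_) (by simp)]
  · simp
  · simp [hj]

theorem sum_mul_map_single (L : EuclideanSpace ℝ ι →L[ℝ] ℝ) (v : EuclideanSpace ℝ ι) :
    ∑ i, v i * L (EuclideanSpace.single i 1) = L v := by
  conv_rhs => rw [← (EuclideanSpace.basisFun ι ℝ).sum_repr v]
  simp

theorem integral_divergence_mul_of_hasCompactSupport (hA : ContDiff ℝ 1 A) (hψ : ContDiff ℝ 1 ψ)
    (hψs : HasCompactSupport ψ) :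
    ∫ x, divergence A x * ψ x = -∫ x, fderiv ℝ ψ x (A x) := by
  have hAi := contDiff_euclidean.1 hA
  have hA' : ∀ i, Continuous fun x => fderiv ℝ (fun y => A y i) x (EuclideanSpace.single i 1) :=
    fun i => ((hAi i).continuous_fderiv one_ne_zero).clm_apply continuous_const
  have hψ' : ∀ i : ι, Continuous fun x => fderiv ℝ ψ x (EuclideanSpace.single i 1) :=
    fun i => (hψ.continuous_fderiv one_ne_zero).clm_apply continuous_const
  have hint₁ : ∀ i, Integrable fun x =>
      fderiv ℝ (fun y => A y i) x (EuclideanSpace.single i 1) * ψ x := fun i =>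
    ((hA' i).mul hψ.continuous).integrable_of_hasCompactSupport hψs.mul_left
  have hint₂ : ∀ i, Integrable fun x =>
      A x i * fderiv ℝ ψ x (EuclideanSpace.single i 1) := fun i =>
    ((hAi i).continuous.mul (hψ' i)).integrable_of_hasCompactSupport
      (hψs.fderiv_apply ℝ _).mul_left
  have hparts : ∀ i, ∫ x, fderiv ℝ (fun y => A y i) x (EuclideanSpace.single i 1) * ψ x
      = -∫ x, A x i * fderiv ℝ ψ x (EuclideanSpace.single i 1) := fun i => by
    rw [integral_mul_fderiv_eq_neg_fderiv_mul_of_integrable (hint₁ i) (hint₂ i)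
      (((hAi i).continuous.mul hψ.continuous).integrable_of_hasCompactSupport hψs.mul_left)
      (fun x _ => (hAi i).differentiable one_ne_zero x)
      (fun x _ => hψ.differentiable one_ne_zero x), neg_neg]
  simp only [divergence, Finset.sum_mul]
  rw [integral_congr_ae (Eventually.of_forall fun x => (sum_mul_map_single _ (A x)).symm),
    integral_finsetSum _ fun i _ => hint₁ i, integral_finsetSum _ fun i _ => hint₂ i,
    ← Finset.sum_neg_distrib]
  exact Finset.sum_congr rfl fun i _ => hparts i

theorem FluxDominated.integral_divergence_mul (hA : FluxDominated volume ψ A h)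
    (hA_contDiff : ContDiff ℝ 1 A) (hint : Integrable fun x => divergence A x * ψ x) :
    ∫ x, divergence A x * ψ x = -∫ x, fderiv ℝ ψ x (A x) := by
  obtain ⟨φ, C, hφ⟩ := exists_isCutoffSeq (V := EuclideanSpace ℝ ι)
  refine tendsto_nhds_unique (hφ.tendsto_integral_mul hint)
    ((hA.tendsto_integral_fderiv_cutoff_mul hφ).neg.congr fun k => ?_)
  rw [← integral_divergence_mul_of_hasCompactSupport hA_contDiff
    ((hφ.contDiff k).mul hA.contDiff) (hφ.hasCompactSupport k).mul_right]
  exact integral_congr_ae (Eventually.of_forall fun x => by simp only; ring)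

end Divergence

section Weights

theorem fderiv_half_norm_sq_apply {V : Type*} [NormedAddCommGroup V] [InnerProductSpace ℝ V]
    (x v : V) : fderiv ℝ (fun y : V => 1 / 2 * ‖y‖ ^ 2) x v = ⟪x, v⟫_ℝ := by
  rw [fderiv_const_mul ((contDiff_norm_sq ℝ (n := 1)).differentiable one_ne_zero x), smul_apply,
    fderiv_norm_sq_apply]
  simp

theorem fderiv_coord_apply {ι : Type*} [Finite ι] (i : ι) (x v : EuclideanSpace ℝ ι) :
    fderiv ℝ (fun y : EuclideanSpace ℝ ι => y i) x v = v i :=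
  have := Fintype.ofFinite ι
  congrArg (· v) (EuclideanSpace.proj i : EuclideanSpace ℝ ι →L[ℝ] ℝ).fderiv

end Weights

section CompactlySupportedWeight

theorem contDiff_slice_of_contDiffOn {E V W : Type*} [NormedAddCommGroup E] [NormedSpace ℝ E]
    [NormedAddCommGroup V] [NormedSpace ℝ V] [NormedAddCommGroup W] [NormedSpace ℝ W]
    {m : WithTop ℕ∞} {f : E → V → W} {s : Set E} {t : E}
    (hf : ContDiffOn ℝ m (Function.uncurry f) (s ×ˢ Set.univ)) (ht : t ∈ s) :
    ContDiff ℝ m (f t) := by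
  rw [← contDiffOn_univ]
  exact hf.comp (f := fun x => (t, x)) (by fun_prop) fun x _ => ⟨ht, trivial⟩

theorem continuous_slice_of_continuousOn {X Y Z : Type*} [TopologicalSpace X] [TopologicalSpace Y]
    [TopologicalSpace Z] {f : X → Y → Z} {s : Set X} {x : X}
    (hf : ContinuousOn (Function.uncurry f) (s ×ˢ Set.univ)) (hx : x ∈ s) : Continuous (f x) := by
  rw [← continuousOn_univ]
  exact hf.comp (f := fun y => (x, y)) (by fun_prop) fun y _ => ⟨hx, trivial⟩

theorem continuousOn_integral_mul_of_hasCompactSupport {X Y : Type*} [TopologicalSpace X]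
    [TopologicalSpace Y] [MeasurableSpace Y] [OpensMeasurableSpace Y] {μ : Measure Y}
    [IsFiniteMeasureOnCompacts μ] {f : X → Y → ℝ} {s : Set X} {ψ : Y → ℝ}
    (hf : ContinuousOn (Function.uncurry f) (s ×ˢ Set.univ)) (hψ : Continuous ψ)
    (hψs : HasCompactSupport ψ) : ContinuousOn (fun x => ∫ y, f x y * ψ y ∂μ) s := by
  refine continuousOn_integral_of_compact_support hψs
    (hf.mul (hψ.comp continuous_snd).continuousOn) fun x y _ hy => ?_
  rw [image_eq_zero_of_notMem_tsupport hy, mul_zero]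

variable {V : Type*} [NormedAddCommGroup V] [NormedSpace ℝ V] {q : ℝ → V → ℝ} {ψ : V → ℝ}
  {I : Set ℝ} {t : ℝ}

theorem hasDerivAt_slice_of_contDiffOn (hq : ContDiffOn ℝ 1 (Function.uncurry q) (I ×ˢ Set.univ))
    (hI : IsOpen I) (ht : t ∈ I) (x : V) :
    HasDerivAt (fun τ => q τ x) (fderiv ℝ (Function.uncurry q) (t, x) (1, 0)) t := by
  have hdiff : DifferentiableAt ℝ (Function.uncurry q) (t, x) :=
    (hq.differentiableOn one_ne_zero).differentiableAt
      ((hI.prod isOpen_univ).mem_nhds ⟨ht, trivial⟩)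
  exact hdiff.hasFDerivAt.comp_hasDerivAt t ((hasDerivAt_id t).prodMk (hasDerivAt_const t x))

theorem continuousOn_deriv_slice (hq : ContDiffOn ℝ 1 (Function.uncurry q) (I ×ˢ Set.univ))
    (hI : IsOpen I) :
    ContinuousOn (Function.uncurry fun t x => deriv (fun τ => q τ x) t) (I ×ˢ Set.univ) :=
  ((hq.continuousOn_fderiv_of_isOpen (hI.prod isOpen_univ) le_rfl).clm_apply
    continuousOn_const).congr fun p hp => (hasDerivAt_slice_of_contDiffOn hq hI hp.1 p.2).deriv

variable [MeasurableSpace V] [BorelSpace V] {μ : Measure V} [IsFiniteMeasureOnCompacts μ]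

theorem hasDerivAt_integral_mul_of_hasCompactSupport
    (hq : ContDiffOn ℝ 1 (Function.uncurry q) (I ×ˢ Set.univ)) (hI : IsOpen I) (hψ : Continuous ψ)
    (hψs : HasCompactSupport ψ) (ht : t ∈ I) :
    HasDerivAt (fun τ => ∫ x, q τ x * ψ x ∂μ) (∫ x, deriv (fun τ => q τ x) t * ψ x ∂μ) t := by
  have hq' := continuousOn_deriv_slice hq hI
  have hint : ∀ f : V → ℝ, Continuous f → Integrable (fun x => f x * ψ x) μ := fun f hf =>
    (hf.mul hψ).integrable_of_hasCompactSupport hψs.mul_left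
  have hslice : ∀ τ ∈ I, Integrable (fun x => q τ x * ψ x) μ := fun τ hτ =>
    hint _ (continuous_slice_of_continuousOn hq.continuousOn hτ)
  obtain ⟨ε, hε, hball⟩ := Metric.nhds_basis_closedBall.mem_iff.1 (hI.mem_nhds ht)
  obtain ⟨C, hC⟩ := ((isCompact_closedBall t ε).prod hψs).exists_bound_of_continuousOn
    (hq'.mono (Set.prod_mono hball (Set.subset_univ _)))
  refine (hasDerivAt_integral_of_dominated_loc_of_deriv_le (bound := fun x => C * ‖ψ x‖)
    (F' := fun τ x => deriv (fun σ => q σ x) τ * ψ x) (Metric.closedBall_mem_nhds t hε)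
    ?_ (hslice t ht) (hint _ (continuous_slice_of_continuousOn hq' ht)).aestronglyMeasurable
    (Eventually.of_forall fun x τ hτ => ?_) ?_ (Eventually.of_forall fun x τ hτ => ?_)).2
  · filter_upwards [hI.mem_nhds ht] with τ hτ using (hslice τ hτ).aestronglyMeasurable
  · by_cases hx : x ∈ tsupport ψ
    · rw [norm_mul]
      gcongr
      exact hC (τ, x) ⟨hτ, hx⟩
    · simp [image_eq_zero_of_notMem_tsupport hx]
  · exact (hψ.norm.integrable_of_hasCompactSupport hψs.norm).const_mul C
  · exact (hasDerivAt_slice_of_contDiffOn hq hI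
      (hball hτ) x).differentiableAt.hasDerivAt.mul_const _

end CompactlySupportedWeight

section ConservationLaw

variable {ι : Type*} [Fintype ι] [DecidableEq ι] {q : ℝ → EuclideanSpace ℝ ι → ℝ}
  {A : ℝ → EuclideanSpace ℝ ι → EuclideanSpace ℝ ι} {ψ : EuclideanSpace ℝ ι → ℝ} {I : Set ℝ}

/-- The conservation law `∂ₜq + div A = 0` for times in `I`, with density `q` and flux `A`, holding
classically. -/
structure IsConservationLaw (q : ℝ → EuclideanSpace ℝ ι → ℝ)
    (A : ℝ → EuclideanSpace ℝ ι → EuclideanSpace ℝ ι) (I : Set ℝ) : Prop where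
  contDiffOn_density : ContDiffOn ℝ 1 (Function.uncurry q) (I ×ˢ Set.univ)
  contDiff_flux : ∀ t ∈ I, ContDiff ℝ 1 (A t)
  deriv_add_divergence : ∀ t ∈ I, ∀ x, deriv (fun τ => q τ x) t + divergence (A t) x = 0

namespace IsConservationLaw

theorem mono {I' : Set ℝ} (hq : IsConservationLaw q A I) (hI : I' ⊆ I) :
    IsConservationLaw q A I' where
  contDiffOn_density := hq.contDiffOn_density.mono (Set.prod_mono hI subset_rfl)
  contDiff_flux t ht := hq.contDiff_flux t (hI ht)
  deriv_add_divergence t ht := hq.deriv_add_divergence t (hI ht)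

theorem deriv_eq (hq : IsConservationLaw q A I) {t : ℝ} (ht : t ∈ I) (x : EuclideanSpace ℝ ι) :
    deriv (fun τ => q τ x) t = -divergence (A t) x :=
  eq_neg_of_add_eq_zero_left (hq.deriv_add_divergence t ht x)

theorem hasDerivAt_integral_mul (hq : IsConservationLaw q A I) (hψ : ContDiff ℝ 1 ψ)
    (hψs : HasCompactSupport ψ) {t : ℝ} (ht : t ∈ interior I) :
    HasDerivAt (fun τ => ∫ x, q τ x * ψ x) (∫ x, fderiv ℝ ψ x (A t x)) t := by
  have ht' := interior_subset ht
  refine (hasDerivAt_integral_mul_of_hasCompactSupport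
    (hq.contDiffOn_density.mono (Set.prod_mono interior_subset subset_rfl)) isOpen_interior
    hψ.continuous hψs ht).congr_deriv ?_
  rw [← neg_eq_iff_eq_neg.2
    (integral_divergence_mul_of_hasCompactSupport (hq.contDiff_flux t ht') hψ hψs), ← integral_neg]
  exact integral_congr_ae (Eventually.of_forall fun x => by
    simp only [hq.deriv_eq ht' x, neg_mul])

/-- Testing with `ψ` times a cutoff and removing the cutoff requires no bound on `∂ₜq`: only the
flux has to be dominated. -/
theorem intervalIntegrable_and_integral_eq_sub {a b B : ℝ} {h : ℝ → EuclideanSpace ℝ ι → ℝ}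
    (hq : IsConservationLaw q A (Set.Icc a b)) (hab : a ≤ b)
    (ha : Integrable fun x => q a x * ψ x) (hb : Integrable fun x => q b x * ψ x)
    (hA : ∀ t ∈ Set.Icc a b, FluxDominated volume ψ (A t) (h t))
    (hB : ∀ t ∈ Set.Icc a b, ∫ x, h t x ≤ B) :
    IntervalIntegrable (fun t => ∫ x, fderiv ℝ ψ x (A t x)) volume a b ∧
      ∫ t in a..b, ∫ x, fderiv ℝ ψ x (A t x) = (∫ x, q b x * ψ x) - ∫ x, q a x * ψ x := by
  obtain ⟨φ, C, hφ⟩ := exists_isCutoffSeq (V := EuclideanSpace ℝ ι)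
  have hC : 0 ≤ C := le_trans (by positivity) (hφ.norm_fderiv_le 0 0)
  have hψ : ContDiff ℝ 1 ψ := (hA a (Set.left_mem_Icc.2 hab)).contDiff
  have htest : ∀ k, ContDiff ℝ 1 fun x => φ k x * ψ x := fun k => (hφ.contDiff k).mul hψ
  have htest_supp : ∀ k, HasCompactSupport fun x => φ k x * ψ x :=
    fun k => (hφ.hasCompactSupport k).mul_right
  have hlim : ∀ t, Integrable (fun x => q t x * ψ x) →
      Tendsto (fun k => ∫ x, q t x * (φ k x * ψ x)) atTop (nhds (∫ x, q t x * ψ x)) :=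
    fun t ht => (hφ.tendsto_integral_mul ht).congr fun k =>
      integral_congr_ae (Eventually.of_forall fun x => by simp only; ring)
  refine intervalIntegrable_and_integral_eq_sub_of_tendsto_deriv (C := (1 + C) * B) hab
    (fun k => continuousOn_integral_mul_of_hasCompactSupport hq.contDiffOn_density.continuousOn
      (htest k).continuous (htest_supp k))
    (fun k t ht => hq.hasDerivAt_integral_mul (htest k) (htest_supp k) (by rwa [interior_Icc]))
    (fun k t ht => ?_)
    (fun t ht => (hA t (Set.Ioo_subset_Icc_self ht)).tendsto_integral_fderiv_cutoff_mul hφ)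
    (hlim a ha) (hlim b hb)
  have ht' := Set.Ioo_subset_Icc_self ht
  calc |∫ x, fderiv ℝ (fun y => φ k y * ψ y) x (A t x)|
      ≤ (1 + C) * ∫ x, h t x := (hA t ht').abs_integral_fderiv_cutoff_mul_le hφ k
    _ ≤ (1 + C) * B := by gcongr; exact hB t ht'

theorem integral_deriv_eq_zero (hq : IsConservationLaw q A I) {t : ℝ} (ht : t ∈ I)
    {h : EuclideanSpace ℝ ι → ℝ} (hA : FluxDominated volume (fun _ => 1) (A t) h) :
    ∫ x, deriv (fun τ => q τ x) t = 0 := by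
  simp only [hq.deriv_eq ht, integral_neg, neg_eq_zero]
  by_cases hint : Integrable (divergence (A t))
  · simpa using hA.integral_divergence_mul (hq.contDiff_flux t ht) (by simpa using hint)
  -- If `div A` is not integrable, its integral has the junk value `0`.
  · exact integral_undef hint

end IsConservationLaw

end ConservationLaw

namespace FullEulerSolution

variable {n : ℕ} {γ cν s₁ T t : ℝ} {S : FullEulerSolution n γ cν s₁ T}

/-- The pressure `p = exp(s/c_ν) ρ^γ`. -/
def pressure (S : FullEulerSolution n γ cν s₁ T) (t : ℝ) (x : EuclideanSpace ℝ (Fin n)) : ℝ :=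
  Real.exp (S.s t x / cν) * S.ρ t x ^ γ

/-- The energy density `(1/2)ρ|u|² + p/(γ−1)`. -/
def energyDensity (S : FullEulerSolution n γ cν s₁ T) (t : ℝ) (x : EuclideanSpace ℝ (Fin n)) : ℝ :=
  (1 / 2 : ℝ) * S.ρ t x * ‖S.u t x‖ ^ 2 + S.pressure t x / (γ - 1)

/-- The flux `ρuᵢu + p eᵢ` of the `i`-th component of the momentum. -/
def momentumFlux (S : FullEulerSolution n γ cν s₁ T) (i : Fin n) (t : ℝ)
    (x : EuclideanSpace ℝ (Fin n)) : EuclideanSpace ℝ (Fin n) :=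
  (S.ρ t x * S.u t x i) • S.u t x + S.pressure t x • EuclideanSpace.single i 1

/-- The total enthalpy density `(1/2)ρ|u|² + γp/(γ−1)`, the density carried by the energy flux. -/
def enthalpyDensity (S : FullEulerSolution n γ cν s₁ T) (t : ℝ)
    (x : EuclideanSpace ℝ (Fin n)) : ℝ :=
  (1 / 2 : ℝ) * S.ρ t x * ‖S.u t x‖ ^ 2 + γ * S.pressure t x / (γ - 1)

section Regularity

theorem contDiff_ρ (ht : t ∈ Set.Icc 0 T) : ContDiff ℝ 1 (S.ρ t) :=
  contDiff_slice_of_contDiffOn S.smooth_ρ ht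

theorem contDiff_u (ht : t ∈ Set.Icc 0 T) : ContDiff ℝ 1 (S.u t) :=
  contDiff_slice_of_contDiffOn S.smooth_u ht

theorem contDiffOn_pressure (hγ : 1 ≤ γ) :
    ContDiffOn ℝ 1 (Function.uncurry S.pressure) (Set.Icc 0 T ×ˢ Set.univ) := by
  have hpow : ContDiff ℝ 1 fun r : ℝ => r ^ γ := by
    exact_mod_cast Real.contDiff_rpow_const_of_le (n := 1) (by exact_mod_cast hγ)
  exact (S.smooth_s.div_const cν).exp.mul (hpow.comp_contDiffOn S.smooth_ρ)

theorem contDiff_pressure (hγ : 1 ≤ γ) (ht : t ∈ Set.Icc 0 T) : ContDiff ℝ 1 (S.pressure t) :=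
  contDiff_slice_of_contDiffOn (contDiffOn_pressure hγ) ht

theorem contDiffOn_kineticEnergyDensity :
    ContDiffOn ℝ 1 (Function.uncurry fun t x => (1 / 2 : ℝ) * S.ρ t x * ‖S.u t x‖ ^ 2)
      (Set.Icc 0 T ×ˢ Set.univ) :=
  (contDiffOn_const.mul S.smooth_ρ).mul (S.smooth_u.norm_sq ℝ)

theorem isConservationLaw_mass :
    IsConservationLaw S.ρ (fun t x => S.ρ t x • S.u t x) (Set.Icc 0 T) where
  contDiffOn_density := S.smooth_ρ
  contDiff_flux _ ht := (contDiff_ρ ht).smul (contDiff_u ht)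
  deriv_add_divergence := S.mass_eq

theorem isConservationLaw_momentum (hγ : 1 ≤ γ) (i : Fin n) :
    IsConservationLaw (fun t x => S.ρ t x * S.u t x i) (S.momentumFlux i) (Set.Icc 0 T) := by
  have htransport : ∀ t ∈ Set.Icc 0 T,
      ContDiff ℝ 1 fun x => (S.ρ t x * S.u t x i) • S.u t x := fun t ht =>
    ((contDiff_ρ ht).mul (contDiff_euclidean.1 (contDiff_u ht) i)).smul (contDiff_u ht)
  have hpressure : ∀ t ∈ Set.Icc 0 T,
      ContDiff ℝ 1 fun x => S.pressure t x • EuclideanSpace.single i (1 : ℝ) := fun t ht =>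
    (contDiff_pressure hγ ht).smul contDiff_const
  refine ⟨S.smooth_ρ.mul (contDiffOn_euclidean.1 S.smooth_u i),
    fun t ht => (htransport t ht).add (hpressure t ht), fun t ht x => ?_⟩
  unfold momentumFlux
  rw [divergence_add ((htransport t ht).differentiable one_ne_zero x)
    ((hpressure t ht).differentiable one_ne_zero x), divergence_smul_single, ← add_assoc]
  exact S.momentum_eq t ht x i

theorem isConservationLaw_energy (hγ : 1 ≤ γ) :
    IsConservationLaw S.energyDensity (fun t x => S.enthalpyDensity t x • S.u t x)
      (Set.Icc 0 T) where
  contDiffOn_density := contDiffOn_kineticEnergyDensity.add ((contDiffOn_pressure hγ).div_const _)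
  contDiff_flux _ ht :=
    ((contDiff_slice_of_contDiffOn contDiffOn_kineticEnergyDensity ht).add
      ((contDiff_const.mul (contDiff_pressure hγ ht)).div_const _)).smul (contDiff_u ht)
  deriv_add_divergence := S.energy_eq

end Regularity

section Functionals

theorem pressure_nonneg (ht : t ∈ Set.Icc 0 T) (x : EuclideanSpace ℝ (Fin n)) :
    0 ≤ S.pressure t x :=
  mul_nonneg (Real.exp_pos _).le (Real.rpow_nonneg (S.ρ_nonneg t ht x) _)

theorem Ek_nonneg (ht : t ∈ Set.Icc 0 T) : 0 ≤ S.Ek t :=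
  mul_nonneg (by norm_num) (integral_nonneg fun x => mul_nonneg (S.ρ_nonneg t ht x) (sq_nonneg _))

theorem Ei_nonneg (hγ : 1 ≤ γ) (ht : t ∈ Set.Icc 0 T) : 0 ≤ S.Ei t :=
  mul_nonneg (one_div_nonneg.2 (by linarith)) (integral_nonneg (pressure_nonneg ht))

theorem integral_ρ_mul_norm_sq (S : FullEulerSolution n γ cν s₁ T) (t : ℝ) :
    ∫ x, S.ρ t x * ‖S.u t x‖ ^ 2 = 2 * S.Ek t := by
  rw [Ek, ← mul_assoc, mul_one_div_cancel two_ne_zero, one_mul]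

theorem integral_pressure (hγ : γ ≠ 1) (S : FullEulerSolution n γ cν s₁ T) (t : ℝ) :
    ∫ x, S.pressure t x = (γ - 1) * S.Ei t := by
  rw [Ei, ← mul_assoc, mul_one_div_cancel (sub_ne_zero.2 hγ), one_mul]
  rfl

theorem E_eq_integral_energyDensity (ht : t ∈ Set.Icc 0 T) :
    S.E t = ∫ x, S.energyDensity t x := by
  simp only [energyDensity, pressure, mul_assoc]
  rw [integral_add ((S.int_ρu2 t ht).const_mul _) ((S.int_p t ht).div_const _),
    integral_const_mul, integral_div, E, Ek, Ei, one_div_mul_eq_div (γ - 1)]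

theorem abs_ρ_mul_inner_le (ht : t ∈ Set.Icc 0 T) (x : EuclideanSpace ℝ (Fin n)) :
    |S.ρ t x * ⟪S.u t x, x⟫_ℝ| ≤ S.ρ t x * ‖S.u t x‖ * ‖x‖ := by
  rw [abs_mul, abs_of_nonneg (S.ρ_nonneg t ht x), mul_assoc]
  exact mul_le_mul_of_nonneg_left (abs_real_inner_le_norm _ _) (S.ρ_nonneg t ht x)

theorem integrable_ρ_mul_inner (ht : t ∈ Set.Icc 0 T) :
    Integrable fun x => S.ρ t x * ⟪S.u t x, x⟫_ℝ :=
  (S.int_ρux t ht).mono' ((contDiff_ρ ht).continuous.mul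
    ((contDiff_u ht).continuous.inner continuous_id)).aestronglyMeasurable
    (Eventually.of_forall (abs_ρ_mul_inner_le ht))

theorem abs_ρ_mul_u_mul_le (ht : t ∈ Set.Icc 0 T) (i : Fin n) (x : EuclideanSpace ℝ (Fin n)) :
    |S.ρ t x * S.u t x i * x i| ≤ S.ρ t x * ‖S.u t x‖ * ‖x‖ := by
  rw [abs_mul, abs_mul, abs_of_nonneg (S.ρ_nonneg t ht x)]
  have hρ := S.ρ_nonneg t ht x
  gcongr
  · exact PiLp.norm_apply_le (S.u t x) i
  · exact PiLp.norm_apply_le x i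

theorem integrable_ρ_mul_u_mul (ht : t ∈ Set.Icc 0 T) (i : Fin n) :
    Integrable fun x => S.ρ t x * S.u t x i * x i :=
  (S.int_ρux t ht).mono' (((contDiff_ρ ht).continuous.mul
    (contDiff_euclidean.1 (contDiff_u ht) i).continuous).mul (by fun_prop)).aestronglyMeasurable
    (Eventually.of_forall (abs_ρ_mul_u_mul_le ht i))

theorem F_eq_sum_integral (ht : t ∈ Set.Icc 0 T) :
    S.F t = ∑ i, ∫ x, S.ρ t x * S.u t x i * x i := by
  rw [← integral_finsetSum _ fun i _ => integrable_ρ_mul_u_mul ht i]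
  refine integral_congr_ae (Eventually.of_forall fun x => ?_)
  simp only [PiLp.inner_apply, Finset.mul_sum, RCLike.inner_apply, conj_trivial]
  exact Finset.sum_congr rfl fun i _ => by ring

theorem integral_ρ_mul_norm_mul_norm_le (ht : t ∈ Set.Icc 0 T) :
    ∫ x, S.ρ t x * ‖S.u t x‖ * ‖x‖ ≤ S.Ek t + S.G t := by
  have hint := ((S.int_ρu2 t ht).const_mul (1 / 2)).add ((S.int_ρx2 t ht).const_mul (1 / 2))
  rw [Ek, G, ← integral_const_mul, ← integral_const_mul,
    ← integral_add ((S.int_ρu2 t ht).const_mul _) ((S.int_ρx2 t ht).const_mul _)]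
  refine integral_mono (S.int_ρux t ht) hint fun x => ?_
  simp only
  nlinarith [mul_nonneg (S.ρ_nonneg t ht x) (sq_nonneg (‖S.u t x‖ - ‖x‖))]

theorem sq_mul_Ei_le_J (ht : t ∈ Set.Icc 0 T) : (t + 1) ^ 2 * S.Ei t ≤ S.J t := by
  have hG := (S.int_ρx2 t ht).const_mul (1 / 2)
  have hF := (integrable_ρ_mul_inner (S := S) ht).const_mul (t + 1)
  have hGF : Integrable fun x => 1 / 2 * (S.ρ t x * ‖x‖ ^ 2)
      - (t + 1) * (S.ρ t x * ⟪S.u t x, x⟫_ℝ) := hG.sub hF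
  have hEk := (S.int_ρu2 t ht).const_mul ((t + 1) ^ 2 * (1 / 2))
  have hsq : S.G t - (t + 1) * S.F t + (t + 1) ^ 2 * S.Ek t
      = ∫ x, 1 / 2 * (S.ρ t x * ‖x - (t + 1) • S.u t x‖ ^ 2) := by
    rw [G, F, Ek, ← mul_assoc, ← integral_const_mul, ← integral_const_mul, ← integral_const_mul,
      ← integral_sub hG hF, ← integral_add hGF hEk]
    refine integral_congr_ae (Eventually.of_forall fun x => ?_)
    simp only [norm_sub_sq_real, inner_smul_right, norm_smul, mul_pow, Real.norm_eq_abs, sq_abs,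
      real_inner_comm x]
    ring
  have hsq_nonneg : 0 ≤ ∫ x, 1 / 2 * (S.ρ t x * ‖x - (t + 1) • S.u t x‖ ^ 2) :=
    integral_nonneg fun x =>
      mul_nonneg (by norm_num) (mul_nonneg (S.ρ_nonneg t ht x) (sq_nonneg _))
  rw [J, E]
  linarith

end Functionals

section EnergyConservation

theorem exists_norm_u_le (ht : t ∈ Set.Icc 0 T) : ∃ B, ∀ x, ‖S.u t x‖ ≤ B := by
  let v : ZeroAtInftyContinuousMap (EuclideanSpace ℝ (Fin n)) (EuclideanSpace ℝ (Fin n)) :=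
    ⟨⟨S.u t, (contDiff_u ht).continuous⟩, tendsto_zero_iff_norm_tendsto_zero.2
      (Metric.cobounded_eq_cocompact (α := EuclideanSpace ℝ (Fin n)) ▸ S.decay_u t ht)⟩
  exact ⟨‖v.toBCF‖, v.toBCF.norm_coe_le_norm⟩

theorem integrable_enthalpyDensity (ht : t ∈ Set.Icc 0 T) : Integrable (S.enthalpyDensity t) := by
  have hkin : Integrable fun x => (1 / 2 : ℝ) * S.ρ t x * ‖S.u t x‖ ^ 2 := by
    simpa only [mul_assoc] using (S.int_ρu2 t ht).const_mul (1 / 2)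
  exact hkin.add (((S.int_p t ht).const_mul γ).div_const _)

theorem exists_fluxDominated_energy (hγ : 1 ≤ γ) (ht : t ∈ Set.Icc 0 T) :
    ∃ h, FluxDominated volume (fun _ => 1) (fun x => S.enthalpyDensity t x • S.u t x) h := by
  obtain ⟨B, hB⟩ := exists_norm_u_le (S := S) ht
  have hB0 : 0 ≤ B := (norm_nonneg _).trans (hB 0)
  refine ⟨fun x => |S.enthalpyDensity t x| * B,
    { contDiff := contDiff_const
      continuous_flux := ((isConservationLaw_energy hγ).contDiff_flux t ht).continuous
      integrable := (integrable_enthalpyDensity ht).abs.mul_const B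
      abs_fderiv_le := fun x => ?_
      abs_mul_norm_le := fun x => ?_ }⟩
  · rw [fderiv_const_apply, zero_apply, abs_zero]
    positivity
  · calc |1| * ‖S.enthalpyDensity t x • S.u t x‖
        = |S.enthalpyDensity t x| * ‖S.u t x‖ := by
          rw [abs_one, one_mul, norm_smul, Real.norm_eq_abs]
      _ ≤ |S.enthalpyDensity t x| * B := by gcongr; exact hB x
      _ ≤ (1 + ‖x‖) * (|S.enthalpyDensity t x| * B) :=
          le_mul_of_one_le_left (by positivity) (le_add_of_nonneg_right (norm_nonneg x))

theorem E_eq_E_zero (hγ : 1 ≤ γ) (ht : t ∈ Set.Icc 0 T) : S.E t = S.E 0 := by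
  have hder : ∀ τ ∈ Set.Icc 0 T, HasDerivAt (fun τ => ∫ x, S.energyDensity τ x) 0 τ :=
    fun τ hτ => by
      obtain ⟨h, hA⟩ := exists_fluxDominated_energy (S := S) hγ hτ
      exact (S.hE τ hτ).congr_deriv ((isConservationLaw_energy hγ).integral_deriv_eq_zero hτ hA)
  rw [E_eq_integral_energyDensity ht, E_eq_integral_energyDensity ⟨le_rfl, ht.1.trans ht.2⟩]
  exact constant_of_has_deriv_right_zero
    (fun τ hτ => (hder τ hτ).continuousAt.continuousWithinAt)
    (fun τ hτ => (hder τ (Set.Ico_subset_Icc_self hτ)).hasDerivWithinAt) t ht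

theorem Ek_le_E_zero (hγ : 1 ≤ γ) (ht : t ∈ Set.Icc 0 T) : S.Ek t ≤ S.E 0 := by
  rw [← E_eq_E_zero hγ ht, E]
  exact le_add_of_nonneg_right (Ei_nonneg hγ ht)

theorem Ei_le_E_zero (hγ : 1 ≤ γ) (ht : t ∈ Set.Icc 0 T) : S.Ei t ≤ S.E 0 := by
  rw [← E_eq_E_zero hγ ht, E]
  exact le_add_of_nonneg_left (Ek_nonneg ht)

theorem continuousOn_Ek (hγ : 1 ≤ γ) : ContinuousOn S.Ek (Set.Icc 0 T) := by
  have hslice : ∀ {f : ℝ → EuclideanSpace ℝ (Fin n) → ℝ},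
      ContDiffOn ℝ 1 (Function.uncurry f) (Set.Icc 0 T ×ˢ Set.univ) →
      ∀ x, Continuous fun τ : Set.Icc 0 T => f τ x := fun hf x =>
    hf.continuousOn.comp_continuous (f := fun τ : Set.Icc 0 T => ((τ : ℝ), x)) (by fun_prop)
      fun τ => ⟨τ.2, trivial⟩
  have hEk : ∀ τ, S.Ek τ = ∫ x, 1 / 2 * S.ρ τ x * ‖S.u τ x‖ ^ 2 := fun τ => by
    simp only [Ek, mul_assoc, integral_const_mul]
  rw [continuousOn_iff_continuous_domRestrict]
  simp only [Set.domRestrict_def, hEk]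
  refine continuous_integral_of_continuous_integral_add
    (g := fun (τ : Set.Icc 0 T) x => S.pressure τ x / (γ - 1)) (fun τ => ?_)
    (fun τ x => mul_nonneg (mul_nonneg (by norm_num) (S.ρ_nonneg τ τ.2 x)) (sq_nonneg _))
    (hslice contDiffOn_kineticEnergyDensity) (fun τ => (S.int_p τ τ.2).div_const _)
    (fun τ x => div_nonneg (pressure_nonneg τ.2 x) (sub_nonneg.2 hγ))
    (fun x => (hslice (contDiffOn_pressure hγ) x).div_const _)
    ((continuous_const (y := S.E 0)).congr fun τ => ?_)
  · simp only [mul_assoc]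
    exact (S.int_ρu2 τ τ.2).const_mul _
  · rw [← E_eq_E_zero hγ τ.2, E_eq_integral_energyDensity τ.2]
    rfl

theorem continuousOn_Ei (hγ : 1 ≤ γ) : ContinuousOn S.Ei (Set.Icc 0 T) :=
  (continuousOn_const.sub (continuousOn_Ek hγ)).congr fun _ hτ =>
    eq_sub_of_add_eq' (E_eq_E_zero hγ hτ)

end EnergyConservation

section Evolution

theorem continuousOn_F : ContinuousOn S.F (Set.Icc 0 T) := fun t ht =>
  (S.hF t ht).continuousAt.continuousWithinAt

theorem continuousOn_G : ContinuousOn S.G (Set.Icc 0 T) := fun t ht =>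
  (S.hG t ht).continuousAt.continuousWithinAt

theorem fluxDominated_mass (ht : t ∈ Set.Icc 0 T) :
    FluxDominated volume (fun x => 1 / 2 * ‖x‖ ^ 2) (fun x => S.ρ t x • S.u t x)
      (fun x => S.ρ t x * ‖S.u t x‖ * ‖x‖) where
  contDiff := contDiff_const.mul (contDiff_norm_sq ℝ)
  continuous_flux := (isConservationLaw_mass.contDiff_flux t ht).continuous
  integrable := S.int_ρux t ht
  abs_fderiv_le x := by
    rw [fderiv_half_norm_sq_apply, inner_smul_right, real_inner_comm]
    exact abs_ρ_mul_inner_le ht x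
  abs_mul_norm_le x := by
    have hρ := S.ρ_nonneg t ht x
    rw [norm_smul, Real.norm_of_nonneg hρ, abs_of_nonneg (by positivity)]
    have : 0 ≤ S.ρ t x * ‖S.u t x‖ * (‖x‖ + ‖x‖ ^ 2 / 2) := by positivity
    linarith

theorem hasDerivAt_G (hγ : 1 ≤ γ) (ht : t ∈ Set.Ioo 0 T) : HasDerivAt S.G (S.F t) t := by
  have hGψ : ∀ τ, S.G τ = ∫ x, S.ρ τ x * (1 / 2 * ‖x‖ ^ 2) := fun τ => by
    simp only [G, mul_left_comm _ (1 / 2 : ℝ), integral_const_mul]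
  have hFψ : ∀ τ, S.F τ
      = ∫ x, fderiv ℝ (fun y : EuclideanSpace ℝ (Fin n) => 1 / 2 * ‖y‖ ^ 2) x
          (S.ρ τ x • S.u τ x) := fun τ => by
    simp only [F, fderiv_half_norm_sq_apply, inner_smul_right, real_inner_comm]
  have hint : ∀ τ ∈ Set.Icc 0 T, Integrable fun x => S.ρ τ x * (1 / 2 * ‖x‖ ^ 2) := fun τ hτ => by
    simpa only [mul_left_comm _ (1 / 2 : ℝ)] using (S.int_ρx2 τ hτ).const_mul (1 / 2)
  obtain ⟨B, hB⟩ := (isCompact_Icc.image_of_continuousOn (continuousOn_G (S := S))).bddAbove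
  refine hasDerivAt_of_forall_integral_eq_sub continuousOn_F (fun τ hτ => ?_) ht
  have hsub : Set.Icc 0 τ ⊆ Set.Icc 0 T := Set.Icc_subset_Icc_right hτ.2
  simp only [hFψ, hGψ]
  refine ((isConservationLaw_mass.mono hsub).intervalIntegrable_and_integral_eq_sub
    (B := S.E 0 + B) hτ.1 (hint 0 ⟨le_rfl, hτ.1.trans hτ.2⟩) (hint τ hτ)
    (fun σ hσ => fluxDominated_mass (hsub hσ)) fun σ hσ => ?_).2
  exact (integral_ρ_mul_norm_mul_norm_le (hsub hσ)).trans
    (add_le_add (Ek_le_E_zero hγ (hsub hσ)) (hB ⟨σ, hsub hσ, rfl⟩))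

theorem norm_momentumFlux_le (ht : t ∈ Set.Icc 0 T) (i : Fin n) (x : EuclideanSpace ℝ (Fin n)) :
    ‖S.momentumFlux i t x‖ ≤ S.ρ t x * ‖S.u t x‖ ^ 2 + S.pressure t x := by
  have hρ := S.ρ_nonneg t ht x
  refine (norm_add_le _ _).trans (add_le_add ?_ ?_)
  · rw [norm_smul, norm_mul, Real.norm_of_nonneg hρ, mul_assoc, sq]
    gcongr
    exact PiLp.norm_apply_le (S.u t x) i
  · rw [norm_smul, PiLp.norm_single, norm_one, mul_one,
      Real.norm_of_nonneg (pressure_nonneg ht x)]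

theorem fluxDominated_momentum (hγ : 1 ≤ γ) (ht : t ∈ Set.Icc 0 T) (i : Fin n) :
    FluxDominated volume (fun x => x i) (S.momentumFlux i t)
      (fun x => S.ρ t x * ‖S.u t x‖ ^ 2 + S.pressure t x) where
  contDiff := by fun_prop
  continuous_flux := ((isConservationLaw_momentum hγ i).contDiff_flux t ht).continuous
  integrable := (S.int_ρu2 t ht).add (S.int_p t ht)
  abs_fderiv_le x := by
    rw [fderiv_coord_apply]
    exact (PiLp.norm_apply_le (S.momentumFlux i t x) i).trans (norm_momentumFlux_le ht i x)
  abs_mul_norm_le x := by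
    have hx : |x i| ≤ 1 + ‖x‖ := (PiLp.norm_apply_le x i).trans (by linarith)
    exact mul_le_mul hx (norm_momentumFlux_le ht i x) (norm_nonneg _) (by positivity)

theorem sum_momentumFlux_apply (S : FullEulerSolution n γ cν s₁ T) (t : ℝ)
    (x : EuclideanSpace ℝ (Fin n)) :
    ∑ i, S.momentumFlux i t x i = S.ρ t x * ‖S.u t x‖ ^ 2 + n * S.pressure t x := by
  simp only [momentumFlux, PiLp.add_apply, PiLp.smul_apply, PiLp.single_apply, if_true,
    smul_eq_mul, mul_one, Finset.sum_add_distrib, mul_assoc, ← sq, ← Finset.mul_sum,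
    ← EuclideanSpace.real_norm_sq_eq, Finset.sum_const, Finset.card_univ, Fintype.card_fin,
    nsmul_eq_mul]

theorem sum_integral_momentumFlux (hγ : 1 < γ) (ht : t ∈ Set.Icc 0 T) :
    ∑ i, ∫ x, fderiv ℝ (fun y : EuclideanSpace ℝ (Fin n) => y i) x (S.momentumFlux i t x)
      = 2 * S.Ek t + n * (γ - 1) * S.Ei t := by
  have hint : ∀ i, Integrable fun x => S.momentumFlux i t x i := fun i => by
    have hA := fluxDominated_momentum (S := S) hγ.le ht i
    refine hA.integrable.mono'
      (contDiff_euclidean.1 ((isConservationLaw_momentum hγ.le i).contDiff_flux t ht)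
        i).continuous.aestronglyMeasurable (Eventually.of_forall fun x => ?_)
    exact (PiLp.norm_apply_le (S.momentumFlux i t x) i).trans (norm_momentumFlux_le ht i x)
  have hp : Integrable (S.pressure t) := S.int_p t ht
  simp only [fderiv_coord_apply]
  rw [← integral_finsetSum _ fun i _ => hint i]
  simp only [sum_momentumFlux_apply]
  rw [integral_add (S.int_ρu2 t ht) (hp.const_mul _), integral_const_mul,
    integral_ρ_mul_norm_sq, integral_pressure hγ.ne', mul_assoc]

theorem hasDerivAt_F (hγ : 1 < γ) (ht : t ∈ Set.Ioo 0 T) :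
    HasDerivAt S.F (2 * S.Ek t + n * (γ - 1) * S.Ei t) t := by
  have hbound : ∀ τ ∈ Set.Icc 0 T, ∫ x, (S.ρ τ x * ‖S.u τ x‖ ^ 2 + S.pressure τ x)
      ≤ 2 * S.E 0 + (γ - 1) * S.E 0 := fun τ hτ => by
    have hp : Integrable (S.pressure τ) := S.int_p τ hτ
    rw [integral_add (S.int_ρu2 τ hτ) hp, integral_ρ_mul_norm_sq, integral_pressure hγ.ne']
    have : 0 ≤ γ - 1 := (sub_pos.2 hγ).le
    gcongr
    exacts [Ek_le_E_zero hγ.le hτ, Ei_le_E_zero hγ.le hτ]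
  have hcont : ContinuousOn (fun τ => 2 * S.Ek τ + n * (γ - 1) * S.Ei τ) (Set.Icc 0 T) :=
    ((continuousOn_Ek hγ.le).const_mul _).add ((continuousOn_Ei hγ.le).const_mul _)
  refine hasDerivAt_of_forall_integral_eq_sub
    (g := fun τ => 2 * S.Ek τ + n * (γ - 1) * S.Ei τ) hcont (fun τ hτ => ?_) ht
  have h0 : (0 : ℝ) ∈ Set.Icc 0 T := ⟨le_rfl, hτ.1.trans hτ.2⟩
  have hsub : Set.Icc 0 τ ⊆ Set.Icc 0 T := Set.Icc_subset_Icc_right hτ.2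
  have hcoord := fun i => ((isConservationLaw_momentum (S := S) hγ.le i).mono
    hsub).intervalIntegrable_and_integral_eq_sub hτ.1 (integrable_ρ_mul_u_mul h0 i)
    (integrable_ρ_mul_u_mul hτ i) (fun σ hσ => fluxDominated_momentum hγ.le (hsub hσ) i)
    fun σ hσ => hbound σ (hsub hσ)
  calc ∫ σ in (0 : ℝ)..τ, (2 * S.Ek σ + n * (γ - 1) * S.Ei σ)
      = ∫ σ in (0 : ℝ)..τ, ∑ i, ∫ x, fderiv ℝ (fun y : EuclideanSpace ℝ (Fin n) => y i) x
          (S.momentumFlux i σ x) := intervalIntegral.integral_congr fun σ hσ =>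
        (sum_integral_momentumFlux hγ (hsub (Set.uIcc_of_le hτ.1 ▸ hσ))).symm
    _ = ∑ i, ((∫ x, S.ρ τ x * S.u τ x i * x i) - ∫ x, S.ρ 0 x * S.u 0 x i * x i) := by
        rw [intervalIntegral.integral_finsetSum fun i _ => (hcoord i).1]
        exact Finset.sum_congr rfl fun i _ => (hcoord i).2
    _ = S.F τ - S.F 0 := by
        rw [Finset.sum_sub_distrib, F_eq_sum_integral hτ, F_eq_sum_integral h0]

end Evolution

section Decay

theorem continuousOn_J (hγ : 1 ≤ γ) : ContinuousOn S.J (Set.Icc 0 T) := by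
  have hE : ContinuousOn S.E (Set.Icc 0 T) :=
    continuousOn_const.congr fun _ hτ => E_eq_E_zero hγ hτ
  have hF := continuousOn_F (S := S)
  have hG := continuousOn_G (S := S)
  unfold J
  fun_prop

theorem hasDerivAt_J (hγ : 1 < γ) (ht : t ∈ Set.Ioo 0 T) :
    HasDerivAt S.J ((2 - n * (γ - 1)) * ((t + 1) * S.Ei t)) t := by
  have hlin : HasDerivAt (fun τ : ℝ => τ + 1) 1 t := (hasDerivAt_id t).add_const 1
  have hE : HasDerivAt S.E 0 t := (hasDerivAt_const t (S.E 0)).congr_of_eventuallyEq <| by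
    filter_upwards [Icc_mem_nhds ht.1 ht.2] with τ hτ using E_eq_E_zero hγ.le hτ
  refine (((hasDerivAt_G hγ.le ht).fun_sub (hlin.fun_mul (hasDerivAt_F hγ ht))).fun_add
    ((hlin.fun_pow 2).fun_mul hE)).congr_deriv ?_
  rw [E]
  push_cast
  ring

theorem antitoneOn_rpow_neg_mul_J (hγ : 1 < γ) {a : ℝ} (ha : 0 ≤ a)
    (haγ : 2 - n * (γ - 1) ≤ a) :
    AntitoneOn (fun t => (t + 1) ^ (-a) * S.J t) (Set.Icc 0 T) := by
  have hder : ∀ t ∈ Set.Ioo 0 T, HasDerivAt (fun t => (t + 1) ^ (-a) * S.J t)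
      ((t + 1) ^ (-a - 1) * ((2 - n * (γ - 1)) * ((t + 1) ^ 2 * S.Ei t) - a * S.J t)) t :=
    fun t ht => by
      have ht1 : t + 1 ≠ 0 := by linarith [ht.1]
      refine ((((hasDerivAt_id' t).add_const 1).rpow_const (p := -a) (Or.inl ht1)).fun_mul
        (hasDerivAt_J hγ ht)).congr_deriv ?_
      rw [Real.rpow_sub_one ht1]
      field_simp
      ring
  have hpow : ContinuousOn (fun t : ℝ => (t + 1) ^ (-a)) (Set.Icc 0 T) :=
    ContinuousOn.rpow_const (by fun_prop) fun t ht => Or.inl (by linarith [ht.1])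
  refine antitoneOn_of_hasDerivWithinAt_nonpos (convex_Icc 0 T) (hpow.mul (continuousOn_J hγ.le))
    (fun t ht => (hder t (by rwa [interior_Icc] at ht)).hasDerivWithinAt) fun t ht => ?_
  have ht' := interior_subset ht
  have ht1 : 0 ≤ t + 1 := by linarith [ht'.1]
  have hX : 0 ≤ (t + 1) ^ 2 * S.Ei t := mul_nonneg (sq_nonneg _) (Ei_nonneg hγ.le ht')
  refine mul_nonpos_of_nonneg_of_nonpos (Real.rpow_nonneg ht1 _) (sub_nonpos.2 ?_)
  calc (2 - n * (γ - 1)) * ((t + 1) ^ 2 * S.Ei t)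
      ≤ a * ((t + 1) ^ 2 * S.Ei t) := mul_le_mul_of_nonneg_right haγ hX
    _ ≤ a * S.J t := mul_le_mul_of_nonneg_left (sq_mul_Ei_le_J ht') ha

theorem Ei_le_J_zero_div_rpow (hγ : 1 < γ) {a : ℝ} (ha : 0 ≤ a) (haγ : 2 - n * (γ - 1) ≤ a)
    (ht : t ∈ Set.Icc 0 T) : S.Ei t ≤ S.J 0 / (t + 1) ^ (2 - a) := by
  have hpos : 0 < t + 1 := by linarith [ht.1]
  rw [le_div_iff₀ (Real.rpow_pos_of_pos hpos _)]
  calc S.Ei t * (t + 1) ^ (2 - a) = (t + 1) ^ (-a) * ((t + 1) ^ 2 * S.Ei t) := by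
        rw [sub_eq_neg_add, Real.rpow_add hpos, Real.rpow_two]
        ring
    _ ≤ (t + 1) ^ (-a) * S.J t :=
        mul_le_mul_of_nonneg_left (sq_mul_Ei_le_J ht) (Real.rpow_nonneg hpos.le _)
    _ ≤ (0 + 1) ^ (-a) * S.J 0 :=
        antitoneOn_rpow_neg_mul_J hγ ha haγ ⟨le_rfl, ht.1.trans ht.2⟩ ht ht.1
    _ = S.J 0 := by rw [zero_add, Real.one_rpow, one_mul]

theorem J_zero (S : FullEulerSolution n γ cν s₁ T) : S.J 0 = S.G 0 - S.F 0 + S.E 0 := by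
  rw [J, zero_add, one_mul, one_pow, one_mul]

end Decay

end FullEulerSolution

/-- **Proposition 3.6, full Euler case: upper decay of the internal energy.**
With `J(0) = G(0) − F(0) + E(0)`: if `1 < γ ≤ 1 + 2/n` then
`E_i(t) ≤ J(0)/(t+1)^{n(γ−1)}`; if `γ > 1 + 2/n` then `E_i(t) ≤ J(0)/(t+1)²`. -/
theorem FullEulerSolution.internal_energy_upper_decay
    {n : ℕ} {γ cν s₁ T : ℝ} (hn : 1 ≤ n) (hγ : 1 < γ) (hcν : 0 < cν) (hT : 0 < T)
    (S : FullEulerSolution n γ cν s₁ T) :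
    (γ ≤ 1 + 2 / n →
      ∀ t ∈ Set.Icc 0 T,
        S.Ei t ≤ (S.G 0 - S.F 0 + S.E 0) / (t + 1) ^ ((n : ℝ) * (γ - 1))) ∧
    (1 + 2 / n < γ →
      ∀ t ∈ Set.Icc 0 T,
        S.Ei t ≤ (S.G 0 - S.F 0 + S.E 0) / (t + 1) ^ 2) := by
  have hn0 : (0 : ℝ) < n := by exact_mod_cast hn
  rw [← J_zero]
  refine ⟨fun hle t ht => ?_, fun hlt t ht => ?_⟩
  · have ha : 0 ≤ 2 - n * (γ - 1) := by
      have hdiv : γ - 1 ≤ 2 / n := by linarith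
      rwa [le_div_iff₀' hn0, ← sub_nonneg] at hdiv
    simpa only [sub_sub_cancel] using Ei_le_J_zero_div_rpow hγ ha le_rfl ht
  · have ha : 2 - n * (γ - 1) ≤ 0 := by
      have hdiv : 2 / n < γ - 1 := by linarith
      rw [div_lt_iff₀' hn0] at hdiv
      linarith
    simpa only [sub_zero, Real.rpow_two] using Ei_le_J_zero_div_rpow hγ le_rfl ha ht
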